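/- arXiv:1108.0858 — 10 statements merged into one kernel-verified Lean document; each statement's English description precedes it below -/
import Mathlib

section
/- Let m ≥ 2 and let a₁, …, a_m be vectors in ℝⁿ. If a vector x ∈ ℝⁿ satisfies aᵢ • x = 0 for all 1 ≤ i ≤ m−1 and a_m • x = 1, then the Gram determinant of the m+1 vectors a₁, …, a_m, x satisfies G(a₁, …, a_m, x) = −G(a₁, …, a_{m−1}) + (x • x) · G(a₁, …, a_m). -/
/-!
The Gram matrix of `a₁, …, a_m, x` is that of `a₁, …, a_m` bordered by a row and a column equal to
`(0, …, 0, 1, ⟪x, x⟫)`. Laplace expansion along this last row leaves two terms: the corner entry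
contributes `⟪x, x⟫ * gram a`, and the entry `1` to its left contributes minus a minor whose last
column is `(0, …, 0, 1)`; expanding that minor along its last column gives `gram (a₁, …, a_{m-1})`.
The determinant identity for bordered matrices is `det_bordered`.
-/

open scoped RealInnerProductSpace

/-- The Gram determinant of a finite family of vectors in Euclidean space. -/
noncomputable def gram {n m : ℕ} (a : Fin m → EuclideanSpace ℝ (Fin n)) : ℝ :=
  (Matrix.of fun i j => ⟪a i, a j⟫).det

/-- If the last row and the last column of `A` are both `(0, …, 0, 1, c)`, where `c` is the corner
entry, then `det A` is `c` times the principal minor omitting the last index, minus the principal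
minor omitting the last two indices. -/
theorem det_bordered {k : ℕ} (A : Matrix (Fin (k + 2)) (Fin (k + 2)) ℝ)
    (hr0 : ∀ i : Fin k, A (Fin.last _) i.castSucc.castSucc = 0)
    (hr1 : A (Fin.last _) (Fin.last k).castSucc = 1)
    (hc0 : ∀ i : Fin k, A i.castSucc.castSucc (Fin.last _) = 0)
    (hc1 : A (Fin.last k).castSucc (Fin.last _) = 1) :
    A.det = -(A.submatrix (fun i : Fin k => i.castSucc.castSucc)
        (fun i : Fin k => i.castSucc.castSucc)).det +
      A (Fin.last _) (Fin.last _) * (A.submatrix Fin.castSucc Fin.castSucc).det := by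
  have hminor : (A.submatrix Fin.castSucc (Fin.last k).castSucc.succAbove).det =
      (A.submatrix (fun i : Fin k => i.castSucc.castSucc)
        (fun i : Fin k => i.castSucc.castSucc)).det := by
    have hlast : (Fin.last k).castSucc.succAbove (Fin.last k) = Fin.last (k + 1) := by
      rw [Fin.succAbove_castSucc_self, Fin.succ_last]
    have hinit : ∀ i : Fin k, (Fin.last k).castSucc.succAbove i.castSucc
        = i.castSucc.castSucc := fun i =>
      Fin.succAbove_of_castSucc_lt _ _ (by simp [Fin.lt_def])
    rw [Matrix.det_succ_column _ (Fin.last k), Fin.sum_univ_castSucc]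
    simp only [Matrix.submatrix_apply, hlast, hc0, hc1, Fin.succAbove_last,
      Matrix.submatrix_submatrix, Function.comp_def, hinit]
    simp [← two_mul]
  rw [Matrix.det_succ_row _ (Fin.last (k + 1)), Fin.sum_univ_castSucc, Fin.sum_univ_castSucc]
  simp only [hr0, hr1, Fin.succAbove_last, hminor]
  -- The sign of the entry `1` is `(-1) ^ ((k + 1) + k)`, and that of the corner is `1`.
  have hs : (-1 : ℝ) ^ (k + 1 + k) = -1 := Odd.neg_one_pow ⟨k, by ring⟩
  simp [hs, ← two_mul]

theorem gram_snoc_eq {n m : ℕ} (hm : 2 ≤ m) (a : Fin m → EuclideanSpace ℝ (Fin n))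
    (x : EuclideanSpace ℝ (Fin n))
    (h0 : ∀ i : Fin m, (i : ℕ) < m - 1 → ⟪a i, x⟫ = 0)
    (h1 : ⟪a ⟨m - 1, by omega⟩, x⟫ = 1) :
    gram (Fin.snoc a x) =
      -gram (fun i : Fin (m - 1) => a (Fin.castLE (Nat.sub_le m 1) i)) +
        ⟪x, x⟫ * gram a := by
  obtain ⟨k, rfl⟩ : ∃ k, m = k + 1 := ⟨m - 1, by omega⟩
  have hx0 : ∀ i : Fin k, ⟪a i.castSucc, x⟫ = 0 := fun i => h0 _ (by simp)
  have hx1 : ⟪a (Fin.last k), x⟫ = 1 := h1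
  unfold gram
  rw [det_bordered]
  · congr 2
    · congr 1
      ext i j
      simp only [Matrix.submatrix_apply, Matrix.of_apply, Fin.snoc_castSucc]
      rfl
    · simp
    · congr 1
      ext i j
      simp
  · intro i
    simpa [real_inner_comm] using hx0 i
  · simpa [real_inner_comm] using hx1
  · intro i
    simpa using hx0 i
  · simpa using hx1
end

section
/- Let m ≥ 2 and let a₁, …, a_m be linearly independent vectors in ℝⁿ. If a vector x ∈ ℝⁿ satisfies aᵢ • x = 0 for all 1 ≤ i ≤ m−1 and a_m • x = 1, then x • x ≥ G(a₁, …, a_{m−1}) / G(a₁, …, a_m). -/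
/-!
Let `M` be the Gram matrix of `a`, `D = det M > 0`, and let `y = ∑ j, c j • a j`, where `c` is the
last column of the adjugate of `M`. From `M * adj M = D • 1`, the vector `y` is orthogonal to every
`a i` except the last one, with which its inner product is `D`; so `D⁻¹ • y` is the solution of the
constraints lying in the span of `a`. The last entry of `c` is the leading principal minor `G`, the
Gram determinant of the first `m - 1` vectors. Hence `⟪x, y⟫ = G` and `⟪y, y⟫ = D * G`, and
`0 ≤ ‖D • x - y‖² = D * (D * ⟪x, x⟫ - G)` is the claim.
-/

open scoped RealInnerProductSpace

/-- The inequality with `m = k + 1`, where `Fin.last` and `Fin.castSucc` are available. -/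
lemma fan_todd_succ {n k : ℕ} (a : Fin (k + 1) → EuclideanSpace ℝ (Fin n))
    (ha : LinearIndependent ℝ a) (x : EuclideanSpace ℝ (Fin n))
    (h0 : ∀ i : Fin k, ⟪a i.castSucc, x⟫ = 0) (h1 : ⟪a (Fin.last k), x⟫ = 1) :
    gram (fun i : Fin k => a i.castSucc) / gram a ≤ ⟪x, x⟫ := by
  have hD : 0 < gram a := (Matrix.posDef_gram_of_linearIndependent (𝕜 := ℝ) ha).det_pos
  set M : Matrix (Fin (k + 1)) (Fin (k + 1)) ℝ := Matrix.of fun i j => ⟪a i, a j⟫ with hM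
  have hDM : M.det = gram a := rfl
  set c : Fin (k + 1) → ℝ := fun j => M.adjugate j (Fin.last k) with hc
  have hlast : c (Fin.last k) = gram (fun i : Fin k => a i.castSucc) := by
    simp only [hc, Matrix.adjugate_fin_succ_eq_det_submatrix, Fin.succAbove_last]
    rw [Even.neg_one_pow ⟨_, rfl⟩, one_mul]
    rfl
  set y := ∑ j, c j • a j with hy
  have hay (i : Fin (k + 1)) : ⟪a i, y⟫ = if i = Fin.last k then gram a else 0 := by
    have h := congrFun (congrFun (Matrix.mul_adjugate M) i) (Fin.last k)
    rw [Matrix.mul_apply, hDM] at h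
    simp only [Matrix.smul_apply, Matrix.one_apply, smul_eq_mul, mul_ite, mul_one,
      mul_zero] at h
    rw [← h, hy, inner_sum]
    exact Finset.sum_congr rfl fun j _ => by
      rw [real_inner_smul_right, mul_comm]
      rfl
  have hyx : ⟪y, x⟫ = c (Fin.last k) := by
    rw [hy, sum_inner, Fin.sum_univ_castSucc]
    simp [real_inner_smul_left, h0, h1]
  have hyy : ⟪y, y⟫ = c (Fin.last k) * gram a := by
    conv_lhs => enter [2]; rw [hy]
    simp [sum_inner, real_inner_smul_left, hay]
  have hpos : 0 ≤ ⟪gram a • x - y, gram a • x - y⟫ := real_inner_self_nonneg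
  rw [real_inner_sub_sub_self, real_inner_smul_left, real_inner_smul_left, real_inner_smul_right,
    real_inner_comm y x, hyx, hyy, hlast] at hpos
  rw [div_le_iff₀ hD]
  refine le_of_mul_le_mul_left ?_ hD
  linarith

theorem fan_todd_inequality {n m : ℕ} (hm : 2 ≤ m) (a : Fin m → EuclideanSpace ℝ (Fin n))
    (ha : LinearIndependent ℝ a) (x : EuclideanSpace ℝ (Fin n))
    (h0 : ∀ i : Fin m, (i : ℕ) < m - 1 → ⟪a i, x⟫ = 0)
    (h1 : ⟪a ⟨m - 1, by omega⟩, x⟫ = 1) :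
    ⟪x, x⟫ ≥ gram (fun i : Fin (m - 1) => a (Fin.castLE (Nat.sub_le m 1) i)) / gram a := by
  obtain ⟨k, rfl⟩ : ∃ k, m = k + 1 := ⟨m - 1, by omega⟩
  exact fan_todd_succ a ha x (fun i => h0 i.castSucc i.isLt) h1
end

section
/- Let m ≥ 2 and let a₁, …, a_m be linearly independent vectors in ℝⁿ, and let x ∈ ℝⁿ satisfy aᵢ • x = 0 for all 1 ≤ i ≤ m−1 and a_m • x = 1. Then x • x = G(a₁, …, a_{m−1}) / G(a₁, …, a_m) if and only if x lies in the linear span of a₁, …, a_m. -/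
/-!
The Gram matrix `G` of `a` is invertible, so `y = ∑ i, (G⁻¹) i m • a i` is a vector of the span of
`a` with `⟪a i, y⟫ = δ i m`, that is, with the same inner products against the `a i` as `x`.
Hence `x - y` is orthogonal to the span of `a`, i.e. `y` is the orthogonal projection of `x`, and
`⟪x, x⟫ = ⟪y, y⟫ + ⟪x - y, x - y⟫`. Here `⟪y, y⟫ = (G⁻¹) m m`, which by the cofactor formula for the
inverse is the quotient of Gram determinants. So equality holds iff `x = y`, iff `x` is in the span.
-/

open scoped RealInnerProductSpace

/-- The last diagonal entry of the inverse Gram matrix is a quotient of Gram determinants, by the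
cofactor formula. For a dependent family both sides are the junk value `0`. -/
lemma inv_gram_last {n k : ℕ} (a : Fin (k + 1) → EuclideanSpace ℝ (Fin n)) :
    (Matrix.of fun i j => ⟪a i, a j⟫)⁻¹ (Fin.last k) (Fin.last k) =
      gram (fun i : Fin k => a i.castSucc) / gram a := by
  rw [Matrix.inv_def, Matrix.smul_apply, Matrix.adjugate_fin_succ_eq_det_submatrix,
    Ring.inverse_eq_inv', smul_eq_mul, div_eq_inv_mul, Fin.succAbove_last,
    Even.neg_one_pow ⟨_, rfl⟩, one_mul]
  rfl

/-- The dual vector to `a (Fin.last k)` in the span of `a`, together with its squared norm. -/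
lemma exists_dual_last {n k : ℕ} (a : Fin (k + 1) → EuclideanSpace ℝ (Fin n))
    (ha : LinearIndependent ℝ a) :
    ∃ y ∈ Submodule.span ℝ (Set.range a),
      (∀ j, ⟪a j, y⟫ = if j = Fin.last k then 1 else 0) ∧
      ⟪y, y⟫ = gram (fun i : Fin k => a i.castSucc) / gram a := by
  set G : Matrix (Fin (k + 1)) (Fin (k + 1)) ℝ := Matrix.of fun i j => ⟪a i, a j⟫ with hG
  have hdet : IsUnit G.det :=
    isUnit_iff_ne_zero.mpr (Matrix.det_gram_ne_zero_iff_linearIndependent.mpr ha)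
  have hdual : ∀ j, ⟪a j, ∑ i, G⁻¹ i (Fin.last k) • a i⟫ =
      if j = Fin.last k then (1 : ℝ) else 0 := by
    intro j
    rw [← Matrix.one_apply, ← Matrix.mul_nonsing_inv G hdet, Matrix.mul_apply, inner_sum]
    refine Finset.sum_congr rfl fun i _ => ?_
    rw [inner_smul_right, hG, Matrix.of_apply, mul_comm]
  refine ⟨∑ i, G⁻¹ i (Fin.last k) • a i, Submodule.sum_mem _ fun i _ =>
    Submodule.smul_mem _ _ (Submodule.subset_span ⟨i, rfl⟩), hdual, ?_⟩
  rw [← inv_gram_last, sum_inner]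
  simp_rw [real_inner_smul_left, hdual]
  simp [hG]

theorem fan_todd_equality_iff {n m : ℕ} (hm : 2 ≤ m) (a : Fin m → EuclideanSpace ℝ (Fin n))
    (ha : LinearIndependent ℝ a) (x : EuclideanSpace ℝ (Fin n))
    (h0 : ∀ i : Fin m, (i : ℕ) < m - 1 → ⟪a i, x⟫ = 0)
    (h1 : ⟪a ⟨m - 1, by omega⟩, x⟫ = 1) :
    ⟪x, x⟫ = gram (fun i : Fin (m - 1) => a (Fin.castLE (Nat.sub_le m 1) i)) / gram a ↔
      x ∈ Submodule.span ℝ (Set.range a) := by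
  obtain ⟨k, rfl⟩ : ∃ k, m = k + 1 := ⟨m - 1, by omega⟩
  obtain ⟨y, hy, hdual, hyy⟩ := exists_dual_last a ha
  have hx : ∀ j, ⟪a j, x⟫ = if j = Fin.last k then (1 : ℝ) else 0 := by
    intro j
    split_ifs with hj
    · subst hj
      exact h1
    · exact h0 j (Fin.val_lt_last hj)
  have horth : ∀ z ∈ Submodule.span ℝ (Set.range a), ⟪z, x - y⟫ = 0 := by
    intro z hz
    induction hz using Submodule.span_induction with
    | mem z hz =>
      obtain ⟨j, rfl⟩ := hz
      rw [inner_sub_right, hx, hdual, sub_self]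
    | zero => exact inner_zero_left _
    | add u v _ _ hu hv => rw [inner_add_left, hu, hv, add_zero]
    | smul c u _ hu => rw [real_inner_smul_left, hu, mul_zero]
  change ⟪x, x⟫ = gram (fun i : Fin k => a i.castSucc) / gram a ↔ _
  rw [← hyy]
  constructor
  · intro h
    have hyx : ⟪y, x⟫ = ⟪y, y⟫ := by
      have := horth y hy
      rwa [inner_sub_right, sub_eq_zero] at this
    have hzero : ⟪x - y, x - y⟫ = 0 := by
      rw [real_inner_sub_sub_self, real_inner_comm y x, hyx, h]
      ring
    rwa [sub_eq_zero.mp (inner_self_eq_zero.mp hzero)]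
  · intro h
    have hzero := horth (x - y) (Submodule.sub_mem _ h hy)
    rw [sub_eq_zero.mp (inner_self_eq_zero.mp hzero)]
end

section
/- (Beesack's theorem.) Let m ≥ 2, let a₁, …, a_m be linearly independent vectors in ℝⁿ, and let c₁, …, c_m be real numbers with c_m ≠ 0. Define a′ᵢ = aᵢ − (cᵢ/c_m) a_m for i = 1, …, m−1 and a′_m = (1/c_m) a_m, let Γ′ be the (invertible) Gram matrix of a′₁, …, a′_m, let β ∈ ℝᵐ be the unique solution of Γ′ β = e_m where e_m = (0, …, 0, 1), and set s′ = β₁ a′₁ + ⋯ + β_m a′_m. Then s′ satisfies aᵢ • s′ = cᵢ for all 1 ≤ i ≤ m, and for every x ∈ ℝⁿ satisfying aᵢ • x = cᵢ for all 1 ≤ i ≤ m one has ‖s′‖ ≤ ‖x‖, with equality if and only if x = s′. -/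
/-!
Write `L` for the last index. Up to invertible operations `a'` is the family `a` again:
`a L = c L • a' L` and `a i = a' i + c i • a' L` for `i ≠ L`. Hence `a'` spans at least what the
independent family `a` spans, so `a'` is linearly independent and its Gram determinant is nonzero.
The same relations turn the constraints `⟪a i, x⟫ = c i` into `⟪a' i, x⟫ = δ_{iL}`, which is what
the equation for `β` says about `s = ∑ j, β j • a' j`. For any other solution `x`, the difference
`x - s` is orthogonal to all `a' i`, hence to `s`, and Pythagoras gives
`‖x‖² = ‖s‖² + ‖x - s‖²`.
-/

open scoped RealInnerProductSpace

/-- Pythagoras in the form of a minimality statement with its equality case. -/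
lemma norm_le_and_eq_iff_of_inner_sub_eq_zero {E : Type*} [NormedAddCommGroup E]
    [InnerProductSpace ℝ E] {s x : E} (h : ⟪s, x - s⟫ = 0) :
    ‖s‖ ≤ ‖x‖ ∧ (‖s‖ = ‖x‖ ↔ x = s) := by
  have hp := norm_add_sq_eq_norm_sq_add_norm_sq_of_inner_eq_zero s (x - s) h
  rw [add_sub_cancel] at hp
  refine ⟨?_, fun he => ?_, fun he => by rw [he]⟩
  · nlinarith [norm_nonneg s, norm_nonneg x, mul_self_nonneg ‖x - s‖]
  · rw [he] at hp
    have h0 : ‖x - s‖ = 0 := mul_self_eq_zero.mp (by linarith)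
    exact sub_eq_zero.mp (norm_eq_zero.mp h0)

/-- Beesack's theorem: the minimum norm solution of a general linear system of
inner-product constraints, obtained via the normalized family `a'`. -/
theorem beesack_min_norm {n m : ℕ} (hm : 2 ≤ m)
    (a : Fin m → EuclideanSpace ℝ (Fin n)) (ha : LinearIndependent ℝ a)
    (c : Fin m → ℝ) (hc : c ⟨m - 1, by omega⟩ ≠ 0)
    (a' : Fin m → EuclideanSpace ℝ (Fin n))
    (ha'i : ∀ i : Fin m, (i : ℕ) < m - 1 →
      a' i = a i - (c i / c ⟨m - 1, by omega⟩) • a ⟨m - 1, by omega⟩)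
    (ha'm : a' ⟨m - 1, by omega⟩ = (c ⟨m - 1, by omega⟩)⁻¹ • a ⟨m - 1, by omega⟩) :
    (Matrix.of fun i j => ⟪a' i, a' j⟫ : Matrix (Fin m) (Fin m) ℝ).det ≠ 0 ∧
      ∀ β : Fin m → ℝ,
        (Matrix.of fun i j => ⟪a' i, a' j⟫ : Matrix (Fin m) (Fin m) ℝ).mulVec β =
            Pi.single ⟨m - 1, by omega⟩ 1 →
          (∀ i : Fin m, ⟪a i, ∑ j, β j • a' j⟫ = c i) ∧
          ∀ x : EuclideanSpace ℝ (Fin n), (∀ i : Fin m, ⟪a i, x⟫ = c i) →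
            ‖∑ j, β j • a' j‖ ≤ ‖x‖ ∧ (‖∑ j, β j • a' j‖ = ‖x‖ ↔ x = ∑ j, β j • a' j) := by
  set L : Fin m := ⟨m - 1, by omega⟩ with hL
  have hlt : ∀ i : Fin m, i ≠ L → (i : ℕ) < m - 1 := fun i hi => by
    have h1 : (i : ℕ) ≠ m - 1 := fun h => hi (Fin.ext h)
    omega
  have haL : a L = c L • a' L := by rw [ha'm, smul_inv_smul₀ hc]
  have hai : ∀ i, i ≠ L → a i = a' i + c i • a' L := fun i hi => by
    rw [ha'i i (hlt i hi), ha'm, smul_smul, ← div_eq_mul_inv, sub_add_cancel]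
  have hspan : Submodule.span ℝ (Set.range a) ≤ Submodule.span ℝ (Set.range a') := by
    have hmem : ∀ i, a' i ∈ Submodule.span ℝ (Set.range a') := fun i =>
      Submodule.subset_span ⟨i, rfl⟩
    rw [Submodule.span_le]
    rintro _ ⟨i, rfl⟩
    rcases eq_or_ne i L with rfl | hi
    · rw [haL]
      exact Submodule.smul_mem _ _ (hmem _)
    · rw [hai i hi]
      exact Submodule.add_mem _ (hmem _) (Submodule.smul_mem _ _ (hmem _))
  have hli : LinearIndependent ℝ a' := by
    rw [linearIndependent_iff_card_le_finrank_span] at ha ⊢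
    exact ha.trans (Submodule.finrank_mono hspan)
  have hiff : ∀ x, (∀ i, ⟪a i, x⟫ = c i) ↔
      ∀ i, ⟪a' i, x⟫ = (Pi.single L 1 : Fin m → ℝ) i := by
    intro x
    constructor
    · intro h
      have hLx : ⟪a' L, x⟫ = 1 := by
        have := h L
        rw [haL, real_inner_smul_left] at this
        exact mul_left_cancel₀ hc (this.trans (mul_one _).symm)
      intro i
      rcases eq_or_ne i L with rfl | hi
      · rw [hLx, Pi.single_eq_same]
      · have := h i
        rw [hai i hi, inner_add_left, real_inner_smul_left, hLx] at this
        rw [Pi.single_eq_of_ne hi]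
        linarith
    · intro h i
      have hLx : ⟪a' L, x⟫ = 1 := by rw [h L, Pi.single_eq_same]
      rcases eq_or_ne i L with rfl | hi
      · rw [haL, real_inner_smul_left, hLx, mul_one]
      · rw [hai i hi, inner_add_left, real_inner_smul_left, hLx, h i, Pi.single_eq_of_ne hi]
        ring
  refine ⟨Matrix.det_gram_ne_zero_iff_linearIndependent.mpr hli, fun β hβ => ?_⟩
  have hs : ∀ i, ⟪a' i, ∑ j, β j • a' j⟫ = (Pi.single L 1 : Fin m → ℝ) i := by
    intro i
    rw [← hβ, inner_sum]
    simp only [Matrix.mulVec, dotProduct, Matrix.of_apply, real_inner_smul_right, mul_comm]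
  refine ⟨(hiff _).mpr hs, fun x hx => norm_le_and_eq_iff_of_inner_sub_eq_zero ?_⟩
  rw [sum_inner]
  refine Finset.sum_eq_zero fun i _ => ?_
  rw [real_inner_smul_left, inner_sub_right, (hiff x).mp hx i, hs i, sub_self, mul_zero]
end

section
/- Let m ≥ 2, let a₁, …, a_m be linearly independent vectors in ℝⁿ, and let c₁, …, c_m be real numbers with c_m ≠ 0. Define a′ᵢ = aᵢ − (cᵢ/c_m) a_m for i = 1, …, m−1 and a′_m = (1/c_m) a_m, and let s′ be the minimum Euclidean norm vector satisfying aᵢ • x = cᵢ for all 1 ≤ i ≤ m. Then ‖s′‖² = G(a′₁, …, a′_{m−1}) / G(a′₁, …, a′_m). -/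
/-!
Let `s` be the minimum norm solution. Pairing with `s` gives `⟪a' i, s⟫ = 0` for every index but
the last and `⟪a' m, s⟫ = 1`; minimality forces `s` to lie in the span of the `a i`, which is
contained in the span of the `a' i` (`mem_span_of_min_norm`). Writing `s = ∑ yⱼ a'ⱼ`, the vector
`y` solves `M y = e_m`, where `M` is the Gram matrix of `a'`, and `‖s‖² = ∑ yⱼ ⟪a'ⱼ, s⟫ = y_m`.
Cramer's rule then expresses `y_m` as the ratio of the Gram determinant of `a'₁, …, a'_{m-1}` to
that of the whole family (`norm_sq_mul_det_gram`), the latter being nonzero since `a'` is again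
linearly independent.
-/

open scoped RealInnerProductSpace

/-- A minimum norm solution of the system `⟪a i, x⟫ = ⟪a i, s⟫` lies in the span of the `a i`,
since its orthogonal projection onto that span is also a solution. -/
lemma mem_span_of_min_norm {E ι : Type*} [NormedAddCommGroup E] [InnerProductSpace ℝ E]
    [FiniteDimensional ℝ E] (a : ι → E) (s : E)
    (hmin : ∀ x : E, (∀ i, ⟪a i, x⟫ = ⟪a i, s⟫) → ‖s‖ ≤ ‖x‖) :
    s ∈ Submodule.span ℝ (Set.range a) := by
  set K := Submodule.span ℝ (Set.range a)
  have horth : ∀ v ∈ K, ⟪v, s - K.starProjection s⟫ = 0 := fun v hv =>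
    Submodule.inner_right_of_mem_orthogonal hv (K.sub_starProjection_mem_orthogonal s)
  have hle : ‖s‖ ≤ ‖K.starProjection s‖ := hmin _ fun i => by
    have h := horth (a i) (Submodule.subset_span ⟨i, rfl⟩)
    rw [inner_sub_right] at h
    linarith
  have hpyth := norm_add_sq_real (K.starProjection s) (s - K.starProjection s)
  rw [horth _ (K.starProjection_apply_mem s), add_sub_cancel] at hpyth
  have hzero : ‖s - K.starProjection s‖ = 0 := by
    nlinarith [norm_nonneg s, norm_nonneg (s - K.starProjection s)]
  rw [sub_eq_zero.mp (norm_eq_zero.mp hzero)]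
  exact K.starProjection_apply_mem s

/-- If `s` is in the span of `b`, is orthogonal to all `b i` but the last, and pairs to `1` with
the last, then Cramer's rule for the Gram matrix of `b` computes `‖s‖²`. -/
lemma norm_sq_mul_det_gram {E : Type*} [NormedAddCommGroup E] [InnerProductSpace ℝ E] {k : ℕ}
    (b : Fin (k + 1) → E) (s : E) (hs : s ∈ Submodule.span ℝ (Set.range b))
    (hb : ∀ i, ⟪b i, s⟫ = if i = Fin.last k then 1 else 0) :
    ‖s‖ ^ 2 * (Matrix.gram ℝ b).det = (Matrix.gram ℝ (fun i : Fin k => b i.castSucc)).det := by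
  obtain ⟨y, hy⟩ := (Submodule.mem_span_range_iff_exists_fun ℝ).mp hs
  have hnorm : ‖s‖ ^ 2 = y (Fin.last k) := by
    rw [← real_inner_self_eq_norm_sq]
    nth_rewrite 1 [← hy]
    simp [sum_inner, real_inner_smul_left, hb]
  have hMy : (Matrix.gram ℝ b).mulVec y = Pi.single (Fin.last k) 1 := by
    ext i
    have h := hb i
    rw [← hy, inner_sum] at h
    simp only [real_inner_smul_right] at h
    simp only [Matrix.mulVec, dotProduct, Matrix.gram_apply, Pi.single_apply, ← h, mul_comm]
  have hcramer := congrFun (congrArg (Matrix.gram ℝ b).adjugate.mulVec hMy) (Fin.last k)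
  rw [Matrix.mulVec_mulVec, Matrix.adjugate_mul, Matrix.smul_mulVec, Matrix.one_mulVec,
    Matrix.mulVec_single_one, Matrix.col_apply, Matrix.adjugate_fin_succ_eq_det_submatrix] at hcramer
  rw [hnorm, mul_comm]
  simp only [Fin.succAbove_last, Fin.val_last, ← two_mul, pow_mul, neg_one_sq, one_pow, one_mul,
    Pi.smul_apply, smul_eq_mul] at hcramer
  exact hcramer

theorem norm_sq_min_norm_solution_general {n m : ℕ} (hm : 2 ≤ m)
    (a : Fin m → EuclideanSpace ℝ (Fin n)) (ha : LinearIndependent ℝ a)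
    (c : Fin m → ℝ) (hc : c ⟨m - 1, by omega⟩ ≠ 0)
    (a' : Fin m → EuclideanSpace ℝ (Fin n))
    (ha'i : ∀ i : Fin m, (i : ℕ) < m - 1 →
      a' i = a i - (c i / c ⟨m - 1, by omega⟩) • a ⟨m - 1, by omega⟩)
    (ha'm : a' ⟨m - 1, by omega⟩ = (c ⟨m - 1, by omega⟩)⁻¹ • a ⟨m - 1, by omega⟩)
    (s' : EuclideanSpace ℝ (Fin n))
    (hs' : ∀ i : Fin m, ⟪a i, s'⟫ = c i)
    (hmin : ∀ x : EuclideanSpace ℝ (Fin n), (∀ i : Fin m, ⟪a i, x⟫ = c i) → ‖s'‖ ≤ ‖x‖) :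
    ‖s'‖ ^ 2 = gram (fun i : Fin (m - 1) => a' (Fin.castLE (Nat.sub_le m 1) i)) / gram a' := by
  obtain ⟨k, rfl⟩ : ∃ k, m = k + 1 := ⟨m - 1, by omega⟩
  change c (Fin.last k) ≠ 0 at hc
  change a' (Fin.last k) = (c (Fin.last k))⁻¹ • a (Fin.last k) at ha'm
  replace ha'i : ∀ i : Fin k, a' i.castSucc =
      a i.castSucc - (c i.castSucc / c (Fin.last k)) • a (Fin.last k) :=
    fun i => ha'i i.castSucc i.isLt
  have hmem : ∀ i, a' i ∈ Submodule.span ℝ (Set.range a') := fun i =>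
    Submodule.subset_span ⟨i, rfl⟩
  have hlast : a (Fin.last k) ∈ Submodule.span ℝ (Set.range a') := by
    have h := Submodule.smul_mem _ (c (Fin.last k)) (hmem (Fin.last k))
    rwa [ha'm, smul_inv_smul₀ hc] at h
  have hspan : Submodule.span ℝ (Set.range a) ≤ Submodule.span ℝ (Set.range a') := by
    rw [Submodule.span_le]
    rintro _ ⟨i, rfl⟩
    induction i using Fin.lastCases with
    | last => exact hlast
    | cast i =>
      have h := Submodule.add_mem _ (hmem i.castSucc)
        (Submodule.smul_mem _ (c i.castSucc / c (Fin.last k)) hlast)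
      rwa [ha'i, sub_add_cancel] at h
  -- `k + 1` vectors whose span contains a `(k + 1)`-dimensional space are independent.
  have hind : LinearIndependent ℝ a' := by
    rw [linearIndependent_iff_card_le_finrank_span]
    exact (linearIndependent_iff_card_le_finrank_span.mp ha).trans (Submodule.finrank_mono hspan)
  have hdet : gram a' ≠ 0 := Matrix.det_gram_ne_zero_iff_linearIndependent.mpr hind
  have hinner : ∀ i, ⟪a' i, s'⟫ = if i = Fin.last k then 1 else 0 := by
    intro i
    induction i using Fin.lastCases with
    | last => simp [ha'm, real_inner_smul_left, hs', hc]
    | cast i =>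
      simp [ha'i, inner_sub_left, real_inner_smul_left, hs', hc]
  rw [eq_div_iff hdet]
  exact norm_sq_mul_det_gram a' s'
    (hspan (mem_span_of_min_norm a s' fun x hx => hmin x fun i => (hx i).trans (hs' i))) hinner
end

section
/- Let m ≥ 2, let a₁, …, a_m be linearly independent vectors in ℝⁿ, let c₁, …, c_m be real numbers, let V = {x ∈ ℝⁿ : aᵢ • x = cᵢ for all 1 ≤ i ≤ m}, and let q ∈ ℝⁿ. Set c′ᵢ = cᵢ − aᵢ • q for i = 1, …, m and assume c′_m ≠ 0. Define a″ᵢ = aᵢ − (c′ᵢ/c′_m) a_m for i = 1, …, m−1 and a″_m = (1/c′_m) a_m. Then the squared distance from q to V satisfies d(q, V)² = (inf { ‖q − x‖ : x ∈ V })² = G(a″₁, …, a″_{m−1}) / G(a″₁, …, a″_m). -/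
/-!
Translate so that `q` is the origin. In terms of the displacement `y = x - q`, the vectors `a''`
turn the equations of the variety into `a''ᵢ • y = 0` for `i < m` and `a''ₘ • y = 1`
(`mem_variety_iff`), and `a''` is still linearly independent since it arises from `a` by an
invertible change of vectors. Let `M` be the Gram matrix of `a''`. The combination
`y₀ = ∑ tⱼ a''ⱼ` with `M t = eₘ` solves these equations, and every solution `y` satisfies
`y₀ • y = tₘ`. In particular `‖y₀‖² = y₀ • y` for all solutions `y`, so by Cauchy-Schwarz `y₀` is
the solution of least norm and the squared distance is `tₘ`. By Cramer's rule `tₘ` is the quotient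
of the last principal minor of `M` by `det M`, i.e. the quotient of the two Gram determinants.
-/

open scoped RealInnerProductSpace

/-- The squared distance from `q` to a variety whose equations, in the displacement from `q`, have
right-hand side the last standard basis vector. -/
lemma infDist_sq_normalized {n k : ℕ} (b : Fin (k + 1) → EuclideanSpace ℝ (Fin n))
    (hb : LinearIndependent ℝ b) (q : EuclideanSpace ℝ (Fin n)) :
    Metric.infDist q {x : EuclideanSpace ℝ (Fin n) |
        ∀ i, ⟪b i, x - q⟫ = (Pi.single (Fin.last k) 1 : Fin (k + 1) → ℝ) i} ^ 2 =
      gram (fun i : Fin k => b i.castSucc) / gram b := by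
  set M : Matrix (Fin (k + 1)) (Fin (k + 1)) ℝ := Matrix.of fun i j => ⟪b i, b j⟫ with hM
  have hdet : M.det ≠ 0 := (Matrix.det_gram_ne_zero_iff_linearIndependent (𝕜 := ℝ)).2 hb
  set e : Fin (k + 1) → ℝ := Pi.single (Fin.last k) 1 with he
  set t : Fin (k + 1) → ℝ := M.det⁻¹ • M.cramer e with ht
  have hMt : M.mulVec t = e := by
    rw [ht, Matrix.mulVec_smul, Matrix.mulVec_cramer, smul_smul, inv_mul_cancel₀ hdet, one_smul]
  have htl : t (Fin.last k) = gram (fun i : Fin k => b i.castSucc) / gram b := by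
    have h1 : M.cramer e (Fin.last k) = gram (fun i : Fin k => b i.castSucc) := by
      have h2 : M.cramer e (Fin.last k) = M.adjugate (Fin.last k) (Fin.last k) := by
        rw [Matrix.cramer_eq_adjugate_mulVec, he, Matrix.mulVec_single_one, Matrix.col_apply]
      rw [h2, Matrix.adjugate_fin_succ_eq_det_submatrix, Fin.succAbove_last,
        Even.neg_one_pow ⟨_, rfl⟩, one_mul]
      rfl
    rw [ht, Pi.smul_apply, h1, smul_eq_mul, div_eq_inv_mul]
    rfl
  set y₀ : EuclideanSpace ℝ (Fin n) := ∑ j, t j • b j with hy₀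
  have hsol : ∀ i, ⟪b i, y₀⟫ = e i := by
    intro i
    rw [← hMt, hy₀, inner_sum]
    simp only [inner_smul_right, Matrix.mulVec, dotProduct, hM, Matrix.of_apply]
    exact Finset.sum_congr rfl fun j _ => mul_comm _ _
  have hinner : ∀ y : EuclideanSpace ℝ (Fin n), (∀ i, ⟪b i, y⟫ = e i) →
      ⟪y₀, y⟫ = t (Fin.last k) := by
    intro y hy
    rw [hy₀, sum_inner]
    simp [inner_smul_left, hy, he, Pi.single_apply]
  have hnorm : ‖y₀‖ ^ 2 = t (Fin.last k) := by
    rw [← real_inner_self_eq_norm_sq, hinner y₀ hsol]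
  have hmem : q + y₀ ∈ {x : EuclideanSpace ℝ (Fin n) | ∀ i, ⟪b i, x - q⟫ = e i} := by
    intro i
    rw [add_sub_cancel_left]
    exact hsol i
  have hdist : Metric.infDist q {x : EuclideanSpace ℝ (Fin n) | ∀ i, ⟪b i, x - q⟫ = e i} =
      ‖y₀‖ := by
    apply le_antisymm
    · refine (Metric.infDist_le_dist_of_mem hmem).trans_eq ?_
      simp
    · refine (Metric.le_infDist ⟨_, hmem⟩).2 fun x hx => ?_
      rw [dist_comm, dist_eq_norm]
      have h := real_inner_le_norm y₀ (x - q)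
      rw [hinner _ hx, ← hnorm, sq] at h
      rcases (norm_nonneg y₀).eq_or_lt with h0 | h0
      · rw [← h0]
        exact norm_nonneg _
      · exact le_of_mul_le_mul_left h h0
  rw [hdist, hnorm, htl]

/-- Subtracting multiples of the last vector from the others and rescaling it by a nonzero factor
is an invertible change of vectors, so it preserves linear independence. -/
lemma linearIndependent_elimination {E : Type*} [AddCommGroup E] [Module ℝ E] {k : ℕ}
    {a b : Fin (k + 1) → E} (ha : LinearIndependent ℝ a) (r : Fin k → ℝ) {s : ℝ} (hs : s ≠ 0)
    (hb : ∀ i : Fin k, b i.castSucc = a i.castSucc - r i • a (Fin.last k))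
    (hl : b (Fin.last k) = s • a (Fin.last k)) : LinearIndependent ℝ b := by
  rw [Fintype.linearIndependent_iff] at ha ⊢
  intro g hg
  have key := ha (Fin.snoc (fun i : Fin k => g i.castSucc)
    (g (Fin.last k) * s - ∑ i : Fin k, g i.castSucc * r i)) (by
      rw [← hg, Fin.sum_univ_castSucc, Fin.sum_univ_castSucc]
      simp only [Fin.snoc_castSucc, Fin.snoc_last, hb, hl, smul_sub, smul_smul, sub_smul,
        Finset.sum_sub_distrib, Finset.sum_smul]
      abel)
  have h1 : ∀ i : Fin k, g i.castSucc = 0 := fun i => by simpa using key i.castSucc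
  intro i
  refine Fin.lastCases ?_ h1 i
  simpa [h1, hs] using key (Fin.last k)

/-- Eliminating the constant terms with the last equation puts the system defining the variety in
the normalized form of `infDist_sq_normalized`. -/
lemma mem_variety_iff {n k : ℕ} {a b : Fin (k + 1) → EuclideanSpace ℝ (Fin n)}
    {c : Fin (k + 1) → ℝ} {q : EuclideanSpace ℝ (Fin n)}
    (hc : c (Fin.last k) - ⟪a (Fin.last k), q⟫ ≠ 0)
    (hb : ∀ i : Fin k, b i.castSucc = a i.castSucc -
      ((c i.castSucc - ⟪a i.castSucc, q⟫) / (c (Fin.last k) - ⟪a (Fin.last k), q⟫)) •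
        a (Fin.last k))
    (hl : b (Fin.last k) = (c (Fin.last k) - ⟪a (Fin.last k), q⟫)⁻¹ • a (Fin.last k))
    (x : EuclideanSpace ℝ (Fin n)) :
    (∀ i, ⟪a i, x⟫ = c i) ↔
      ∀ i, ⟪b i, x - q⟫ = (Pi.single (Fin.last k) 1 : Fin (k + 1) → ℝ) i := by
  rw [Fin.forall_fin_succ', Fin.forall_fin_succ', and_comm, and_comm (b := ⟪b _, _⟫ = _)]
  -- The last equations are equivalent by rescaling; given them, so are the remaining ones.
  have hlast : ⟪a (Fin.last k), x⟫ = c (Fin.last k) ↔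
      ⟪b (Fin.last k), x - q⟫ = (Pi.single (Fin.last k) 1 : Fin (k + 1) → ℝ) (Fin.last k) := by
    rw [hl, real_inner_smul_left, inner_sub_right, Pi.single_eq_same, inv_mul_eq_one₀ hc]
    constructor <;> intro h <;> linarith
  rw [← hlast]
  refine and_congr_right fun hx => forall_congr' fun i => ?_
  rw [hb, inner_sub_left, real_inner_smul_left, inner_sub_right, inner_sub_right, hx,
    div_mul_cancel₀ _ hc, Pi.single_eq_of_ne (Fin.castSucc_lt_last i).ne]
  constructor <;> intro h <;> linarith

theorem dist_sq_point_to_linear_variety {n m : ℕ} (hm : 2 ≤ m)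
    (a : Fin m → EuclideanSpace ℝ (Fin n)) (ha : LinearIndependent ℝ a)
    (c : Fin m → ℝ) (q : EuclideanSpace ℝ (Fin n))
    (hc' : c ⟨m - 1, by omega⟩ - ⟪a ⟨m - 1, by omega⟩, q⟫ ≠ 0)
    (a'' : Fin m → EuclideanSpace ℝ (Fin n))
    (ha''i : ∀ i : Fin m, (i : ℕ) < m - 1 →
      a'' i = a i - ((c i - ⟪a i, q⟫) / (c ⟨m - 1, by omega⟩ - ⟪a ⟨m - 1, by omega⟩, q⟫)) •
        a ⟨m - 1, by omega⟩)
    (ha''m : a'' ⟨m - 1, by omega⟩ =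
      (c ⟨m - 1, by omega⟩ - ⟪a ⟨m - 1, by omega⟩, q⟫)⁻¹ • a ⟨m - 1, by omega⟩) :
    Metric.infDist q {x : EuclideanSpace ℝ (Fin n) | ∀ i : Fin m, ⟪a i, x⟫ = c i} ^ 2 =
      gram (fun i : Fin (m - 1) => a'' (Fin.castLE (Nat.sub_le m 1) i)) / gram a'' := by

  obtain ⟨k, rfl⟩ : ∃ k, m = k + 1 := ⟨m - 1, by omega⟩
  have hb := fun i : Fin k => ha''i i.castSucc i.isLt
  have hli : LinearIndependent ℝ a'' :=
    linearIndependent_elimination ha _ (inv_ne_zero hc') hb ha''m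
  have hV : {x : EuclideanSpace ℝ (Fin n) | ∀ i, ⟪a i, x⟫ = c i} = {x |
      ∀ i, ⟪a'' i, x - q⟫ = (Pi.single (Fin.last k) 1 : Fin (k + 1) → ℝ) i} :=
    Set.ext fun x => mem_variety_iff hc' hb ha''m x
  rw [hV]
  exact infDist_sq_normalized a'' hli q
end

section
/- Let V₁ = P₁ + M₁ and V₂ = P₂ + M₂ be affine subspaces (linear varieties) of ℝⁿ, where M₁ and M₂ are linear subspaces of ℝⁿ with M₁ ∩ M₂ = {0} and P₁, P₂ ∈ ℝⁿ. Then there exists a unique pair of points (S₁, S₂) with S₁ ∈ V₁ and S₂ ∈ V₂ such that ‖S₁ − S₂‖ = inf { ‖x − y‖ : x ∈ V₁, y ∈ V₂ }; in particular the distance between V₁ and V₂ is attained. -/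
/-!
With `P₂ - P₁ = p + q`, where `p ∈ M₁ ⊔ M₂` and `q ∈ (M₁ ⊔ M₂)ᗮ`, Pythagoras gives
`‖(P₁ + v) - (P₂ + w)‖² = ‖(v - w) - p‖² + ‖q‖²` for `v ∈ M₁`, `w ∈ M₂`. So the infimum is `‖q‖`,
attained exactly when `v - w = p`. Such `v`, `w` exist as `p ∈ M₁ ⊔ M₂`, and they are unique as
`M₁ ⊓ M₂ = ⊥`.
-/

theorem exists_unique_best_approximation_pair {n : ℕ}
    (M₁ M₂ : Submodule ℝ (EuclideanSpace ℝ (Fin n))) (hM : M₁ ⊓ M₂ = ⊥)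
    (P₁ P₂ : EuclideanSpace ℝ (Fin n)) :
    ∃! S : EuclideanSpace ℝ (Fin n) × EuclideanSpace ℝ (Fin n),
      (∃ v ∈ M₁, S.1 = P₁ + v) ∧ (∃ w ∈ M₂, S.2 = P₂ + w) ∧
        ‖S.1 - S.2‖ =
          sInf {d : ℝ | ∃ v ∈ M₁, ∃ w ∈ M₂, d = ‖(P₁ + v) - (P₂ + w)‖} := by
  obtain ⟨p, hp, q, hq, hpq⟩ := (M₁ ⊔ M₂).exists_add_mem_mem_orthogonal (P₂ - P₁)
  obtain ⟨v₀, hv₀, w', hw', hvw⟩ := Submodule.mem_sup.1 hp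
  have pyth : ∀ v ∈ M₁, ∀ w ∈ M₂,
      ‖(P₁ + v) - (P₂ + w)‖ ^ 2 = ‖(v - w) - p‖ ^ 2 + ‖q‖ ^ 2 := by
    intro v hv w hw
    have hmem : (v - w) - p ∈ M₁ ⊔ M₂ :=
      sub_mem (sub_mem (Submodule.mem_sup_left hv) (Submodule.mem_sup_right hw)) hp
    have hdecomp : (P₁ + v) - (P₂ + w) = ((v - w) - p) - q := by
      rw [sub_sub (v - w), ← hpq]; abel
    rw [hdecomp, @norm_sub_sq_real, hq _ hmem]
    ring
  have attained : ‖(P₁ + v₀) - (P₂ + -w')‖ = ‖q‖ := by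
    have h := pyth v₀ hv₀ (-w') (neg_mem hw')
    rw [sub_neg_eq_add, hvw, sub_self, norm_zero] at h
    exact (sq_eq_sq₀ (norm_nonneg _) (norm_nonneg _)).1 (by simpa using h)
  have inf_eq : sInf {d : ℝ | ∃ v ∈ M₁, ∃ w ∈ M₂, d = ‖(P₁ + v) - (P₂ + w)‖} = ‖q‖ := by
    refine IsLeast.csInf_eq ⟨⟨v₀, hv₀, -w', neg_mem hw', attained.symm⟩, ?_⟩
    rintro d ⟨v, hv, w, hw, rfl⟩
    refine (sq_le_sq₀ (norm_nonneg _) (norm_nonneg _)).1 ?_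
    rw [pyth v hv w hw]
    exact le_add_of_nonneg_left (sq_nonneg _)
  rw [inf_eq]
  refine ⟨(P₁ + v₀, P₂ + -w'), ⟨⟨v₀, hv₀, rfl⟩, ⟨-w', neg_mem hw', rfl⟩, attained⟩, ?_⟩
  rintro ⟨_, _⟩ ⟨⟨v, hv, rfl⟩, ⟨w, hw, rfl⟩, h⟩
  have hsq := pyth v hv w hw
  dsimp only at h
  rw [h] at hsq
  have hzero : (v - w) - p = 0 := by
    rw [← norm_eq_zero, ← sq_eq_zero_iff]
    linarith
  have hdiff : v - v₀ = w + w' := by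
    rw [← hvw] at hzero
    rw [← sub_eq_zero, ← hzero]
    abel
  have hbot : v - v₀ ∈ M₁ ⊓ M₂ := ⟨sub_mem hv hv₀, hdiff ▸ add_mem hw hw'⟩
  rw [hM, Submodule.mem_bot] at hbot
  rw [sub_eq_zero.1 hbot, eq_neg_of_add_eq_zero_left (hdiff.symm.trans hbot)]
end

section
/- Let V₁ = P₁ + M₁ and V₂ = P₂ + M₂ be affine subspaces (linear varieties) of ℝⁿ, where M₁ and M₂ are linear subspaces and P₁, P₂ ∈ ℝⁿ. Then a pair of points S₁ ∈ V₁ and S₂ ∈ V₂ satisfies ‖S₁ − S₂‖ = inf { ‖x − y‖ : x ∈ V₁, y ∈ V₂ } if and only if S₁ is a point of V₁ at minimal distance from S₂ (i.e., ‖S₁ − S₂‖ ≤ ‖x − S₂‖ for all x ∈ V₁) and simultaneously S₂ is a point of V₂ at minimal distance from S₁ (i.e., ‖S₁ − S₂‖ ≤ ‖S₁ − y‖ for all y ∈ V₂). -/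
/-!
Each one-sided minimality condition says that `S₁ - S₂` is orthogonal to the corresponding
direction `M₁` or `M₂` (`inner_eq_zero_of_forall_norm_le_norm_add`). Both together make `S₁ - S₂`
orthogonal to `M₁ + M₂`. Every difference of a point of `V₁` and a point of `V₂` is `S₁ - S₂` plus
an element of `M₁ + M₂`, so by Pythagoras its norm is at least `‖S₁ - S₂‖`. The converse is
immediate, since an infimum is a lower bound.
-/

/-- A shortest vector of the coset `a + M` is orthogonal to `M`. -/
theorem inner_eq_zero_of_forall_norm_le_norm_add {E : Type*} [NormedAddCommGroup E]
    [InnerProductSpace ℝ E] (M : Submodule ℝ E) (a : E) (h : ∀ u ∈ M, ‖a‖ ≤ ‖a + u‖) :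
    ∀ u ∈ M, inner ℝ a u = 0 := by
  intro u hu
  -- `‖a + t • u‖² - ‖a‖²` is a nonnegative quadratic in `t` without constant term, so its
  -- discriminant `(2 * inner ℝ a u) ^ 2` is nonpositive.
  have hq : ∀ t : ℝ, 0 ≤ ‖u‖ ^ 2 * (t * t) + (2 * inner ℝ a u) * t + 0 := by
    intro t
    have h1 := pow_le_pow_left₀ (norm_nonneg a) (h _ (M.smul_mem t hu)) 2
    rw [norm_add_sq_real, inner_smul_right, norm_smul, mul_pow, Real.norm_eq_abs, sq_abs] at h1
    linarith
  have hd := discrim_le_zero hq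
  unfold discrim at hd
  nlinarith [sq_nonneg (inner ℝ a u)]

theorem norm_le_norm_add_of_inner_eq_zero {E : Type*} [NormedAddCommGroup E]
    [InnerProductSpace ℝ E] (a u : E) (h : inner ℝ a u = 0) : ‖a‖ ≤ ‖a + u‖ := by
  refine (sq_le_sq₀ (norm_nonneg _) (norm_nonneg _)).1 ?_
  rw [norm_add_sq_real, h]
  nlinarith [sq_nonneg ‖u‖]

theorem best_approximation_pair_iff_mutual_projection {n : ℕ}
    (M₁ M₂ : Submodule ℝ (EuclideanSpace ℝ (Fin n)))
    (P₁ P₂ S₁ S₂ : EuclideanSpace ℝ (Fin n))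
    (hS₁ : ∃ v ∈ M₁, S₁ = P₁ + v) (hS₂ : ∃ w ∈ M₂, S₂ = P₂ + w) :
    ‖S₁ - S₂‖ = sInf {d : ℝ | ∃ v ∈ M₁, ∃ w ∈ M₂, d = ‖(P₁ + v) - (P₂ + w)‖} ↔
      ((∀ x : EuclideanSpace ℝ (Fin n), (∃ v ∈ M₁, x = P₁ + v) → ‖S₁ - S₂‖ ≤ ‖x - S₂‖) ∧
        (∀ y : EuclideanSpace ℝ (Fin n), (∃ w ∈ M₂, y = P₂ + w) → ‖S₁ - S₂‖ ≤ ‖S₁ - y‖)) := by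
  obtain ⟨v₀, hv₀, rfl⟩ := hS₁
  obtain ⟨w₀, hw₀, rfl⟩ := hS₂
  have hbdd : BddBelow {d : ℝ | ∃ v ∈ M₁, ∃ w ∈ M₂, d = ‖(P₁ + v) - (P₂ + w)‖} := by
    refine ⟨0, ?_⟩
    rintro d ⟨v, -, w, -, rfl⟩
    exact norm_nonneg _
  constructor
  · intro h
    refine ⟨?_, ?_⟩
    · rintro x ⟨v, hv, rfl⟩
      rw [h]
      exact csInf_le hbdd ⟨v, hv, w₀, hw₀, rfl⟩
    · rintro y ⟨w, hw, rfl⟩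
      rw [h]
      exact csInf_le hbdd ⟨v₀, hv₀, w, hw, rfl⟩
  · rintro ⟨h₁, h₂⟩
    have o₁ := inner_eq_zero_of_forall_norm_le_norm_add M₁ ((P₁ + v₀) - (P₂ + w₀)) (by
      intro u hu
      refine (h₁ _ ⟨v₀ + u, M₁.add_mem hv₀ hu, rfl⟩).trans_eq ?_
      congr 1
      abel)
    have o₂ := inner_eq_zero_of_forall_norm_le_norm_add M₂ ((P₁ + v₀) - (P₂ + w₀)) (by
      intro u hu
      refine (h₂ _ ⟨w₀ - u, M₂.sub_mem hw₀ hu, rfl⟩).trans_eq ?_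
      congr 1
      abel)
    symm
    apply IsLeast.csInf_eq
    refine ⟨⟨v₀, hv₀, w₀, hw₀, rfl⟩, ?_⟩
    rintro d ⟨v, hv, w, hw, rfl⟩
    have ho : inner ℝ ((P₁ + v₀) - (P₂ + w₀)) ((v - v₀) - (w - w₀)) = 0 := by
      rw [inner_sub_right, o₁ _ (M₁.sub_mem hv hv₀), o₂ _ (M₂.sub_mem hw hw₀), sub_zero]
    refine (norm_le_norm_add_of_inner_eq_zero _ _ ho).trans_eq ?_
    congr 1
    abel
end

section
/- Let V₁ and V₂ be affine subspaces (linear varieties) of ℝⁿ and let (S₁, S₂) ∈ V₁ × V₂ be a best approximation pair, i.e., ‖S₁ − S₂‖ = inf { ‖x − y‖ : x ∈ V₁, y ∈ V₂ }. Then the sphere centered at the midpoint (S₁ + S₂)/2 with radius ‖S₁ − S₂‖/2 is tangent to both varieties: for every x ∈ V₁ ∪ V₂ one has ‖x − (S₁ + S₂)/2‖ ≥ ‖S₁ − S₂‖/2, and equality holds at x = S₁ and at x = S₂. -/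
/-!
No orthogonality is needed. If `x` lies in the variety containing the foot `Sᵢ`, then so does
`2x - Sᵢ`, the reflection of `Sᵢ` through `x`. Up to sign, `x` minus the midpoint of `S₁` and `S₂`
is half the difference between `2x - Sᵢ` and the other foot. That difference has norm at least
`‖S₁ - S₂‖` by minimality, which gives the bound.
-/

theorem smallest_sphere_tangent_to_both_varieties {n : ℕ}
    (M₁ M₂ : Submodule ℝ (EuclideanSpace ℝ (Fin n)))
    (P₁ P₂ S₁ S₂ : EuclideanSpace ℝ (Fin n))
    (hS₁ : ∃ v ∈ M₁, S₁ = P₁ + v) (hS₂ : ∃ w ∈ M₂, S₂ = P₂ + w)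
    (hbest : ‖S₁ - S₂‖ = sInf {d : ℝ | ∃ v ∈ M₁, ∃ w ∈ M₂, d = ‖(P₁ + v) - (P₂ + w)‖}) :
    (∀ x : EuclideanSpace ℝ (Fin n),
        ((∃ v ∈ M₁, x = P₁ + v) ∨ (∃ w ∈ M₂, x = P₂ + w)) →
          ‖x - (2 : ℝ)⁻¹ • (S₁ + S₂)‖ ≥ ‖S₁ - S₂‖ / 2) ∧
      ‖S₁ - (2 : ℝ)⁻¹ • (S₁ + S₂)‖ = ‖S₁ - S₂‖ / 2 ∧
      ‖S₂ - (2 : ℝ)⁻¹ • (S₁ + S₂)‖ = ‖S₁ - S₂‖ / 2 := by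
  have hmin : ∀ v ∈ M₁, ∀ w ∈ M₂, ‖S₁ - S₂‖ ≤ ‖(P₁ + v) - (P₂ + w)‖ := by
    intro v hv w hw
    rw [hbest]
    -- Distances are bounded below by `0`, so the real infimum is a genuine lower bound.
    refine csInf_le ⟨0, ?_⟩ ⟨v, hv, w, hw, rfl⟩
    rintro d ⟨v, -, w, -, rfl⟩
    exact norm_nonneg _
  have half : ∀ z : EuclideanSpace ℝ (Fin n), ‖(2 : ℝ)⁻¹ • z‖ = ‖z‖ / 2 := by
    intro z
    rw [norm_smul, Real.norm_of_nonneg (by norm_num)]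
    ring
  obtain ⟨v₁, hv₁, h₁⟩ := hS₁
  obtain ⟨w₂, hw₂, h₂⟩ := hS₂
  refine ⟨?_, ?_, ?_⟩
  · rintro x (⟨v, hv, rfl⟩ | ⟨w, hw, rfl⟩)
    -- With `x = P₁ + v`, the reflected point `2x - S₁` is `P₁ + (2v - v₁)`.
    · have hle := hmin ((2 : ℝ) • v - v₁) (M₁.sub_mem (M₁.smul_mem 2 hv) hv₁) w₂ hw₂
      have heq : P₁ + v - (2 : ℝ)⁻¹ • (S₁ + S₂)
          = (2 : ℝ)⁻¹ • ((P₁ + ((2 : ℝ) • v - v₁)) - (P₂ + w₂)) := by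
        rw [h₁, h₂]
        module
      rw [heq, half]
      linarith
    · have hle := hmin v₁ hv₁ ((2 : ℝ) • w - w₂) (M₂.sub_mem (M₂.smul_mem 2 hw) hw₂)
      have heq : P₂ + w - (2 : ℝ)⁻¹ • (S₁ + S₂)
          = -((2 : ℝ)⁻¹ • ((P₁ + v₁) - (P₂ + ((2 : ℝ) • w - w₂)))) := by
        rw [h₁, h₂]
        module
      rw [heq, norm_neg, half]
      linarith
  · rw [← half]
    congr 1
    module
  · rw [norm_sub_rev S₁ S₂, ← half]
    congr 1
    module
end

section
/- Let V₁ = P₁ + M₁ and V₂ = P₂ + M₂ be affine subspaces (linear varieties) of ℝⁿ, where M₁ and M₂ are linear subspaces and P₁, P₂ ∈ ℝⁿ, and let (S₁, S₂) ∈ V₁ × V₂ be a best approximation pair, i.e., ‖S₁ − S₂‖ = inf { ‖x − y‖ : x ∈ V₁, y ∈ V₂ }. Define the hyperplane-type sets H₁ = { x ∈ ℝⁿ : (S₁ − S₂) • (x − S₁) = 0 } and H₂ = { x ∈ ℝⁿ : (S₁ − S₂) • (x − S₂) = 0 }. Then V₁ ⊆ H₁ and V₂ ⊆ H₂; that is,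 H₁ and H₂ are supporting hyperplanes of the two varieties at S₁ and S₂ respectively. -/
/-!
A best approximation pair minimises the distance along every line through `S₁` in `V₁` and every line
through `S₂` in `V₂`. Hence `S₁ - S₂` is a shortest vector on each line `(S₁ - S₂) + ℝ m` with `m` a
direction of either variety, and is orthogonal to `m` by
`inner_eq_zero_of_norm_le_norm_add_smul`.
-/

open scoped RealInnerProductSpace

/-- If `u` is a shortest vector on the line `u + ℝ m`, then `u ⟂ m`: the polynomial
`‖m‖² t² + 2 ⟪u, m⟫ t` is nonnegative for all `t`, so its discriminant `4 ⟪u, m⟫²` is at most `0`. -/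
lemma inner_eq_zero_of_norm_le_norm_add_smul {E : Type*} [NormedAddCommGroup E]
    [InnerProductSpace ℝ E] {u m : E} (h : ∀ t : ℝ, ‖u‖ ≤ ‖u + t • m‖) : ⟪u, m⟫ = 0 := by
  have key : discrim (‖m‖ ^ 2) (2 * ⟪u, m⟫) 0 ≤ 0 := by
    refine discrim_le_zero fun t => ?_
    have h₂ : ‖u‖ ^ 2 ≤ ‖u + t • m‖ ^ 2 := pow_le_pow_left₀ (norm_nonneg u) (h t) 2
    rw [norm_add_sq_real, norm_smul, mul_pow, Real.norm_eq_abs, sq_abs, inner_smul_right] at h₂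
    linarith
  rw [discrim] at key
  nlinarith

theorem supporting_hyperplanes_of_best_approximation_pair {n : ℕ}
    (M₁ M₂ : Submodule ℝ (EuclideanSpace ℝ (Fin n)))
    (P₁ P₂ S₁ S₂ : EuclideanSpace ℝ (Fin n))
    (hS₁ : ∃ v ∈ M₁, S₁ = P₁ + v) (hS₂ : ∃ w ∈ M₂, S₂ = P₂ + w)
    (hbest : ‖S₁ - S₂‖ = sInf {d : ℝ | ∃ v ∈ M₁, ∃ w ∈ M₂, d = ‖(P₁ + v) - (P₂ + w)‖}) :
    {x : EuclideanSpace ℝ (Fin n) | ∃ v ∈ M₁, x = P₁ + v} ⊆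
        {x : EuclideanSpace ℝ (Fin n) | ⟪S₁ - S₂, x - S₁⟫ = 0} ∧
      {x : EuclideanSpace ℝ (Fin n) | ∃ w ∈ M₂, x = P₂ + w} ⊆
        {x : EuclideanSpace ℝ (Fin n) | ⟪S₁ - S₂, x - S₂⟫ = 0} := by
  obtain ⟨a, ha, rfl⟩ := hS₁
  obtain ⟨b, hb, rfl⟩ := hS₂
  have hmin : ∀ v ∈ M₁, ∀ w ∈ M₂, ‖(P₁ + a) - (P₂ + b)‖ ≤ ‖(P₁ + v) - (P₂ + w)‖ := by
    intro v hv w hw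
    rw [hbest]
    refine csInf_le ⟨0, ?_⟩ ⟨v, hv, w, hw, rfl⟩
    rintro _ ⟨v, -, w, -, rfl⟩
    exact norm_nonneg _
  constructor
  · rintro _ ⟨v, hv, rfl⟩
    refine inner_eq_zero_of_norm_le_norm_add_smul fun t => ?_
    -- Move the first point along `V₁` in the direction `v - a`, keeping the second fixed.
    refine (hmin (a + t • (v - a)) (M₁.add_mem ha (M₁.smul_mem t (M₁.sub_mem hv ha)))
      b hb).trans_eq (congrArg norm ?_)
    module
  · rintro _ ⟨w, hw, rfl⟩
    refine inner_eq_zero_of_norm_le_norm_add_smul fun t => ?_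
    -- Moving the second point changes the difference with the opposite sign, hence `-t`.
    refine (hmin a ha (b + (-t) • (w - b))
      (M₂.add_mem hb (M₂.smul_mem (-t) (M₂.sub_mem hw hb)))).trans_eq (congrArg norm ?_)
    module
end
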